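/- Let q be an integer with q ≥ 3, let A ⊂ ℚ be a finite set, and let N ∈ ℕ be such that N·a ∈ ℤ for every a ∈ A. Fix ρ > 1. For any finite words i = i_1…i_n ∈ A^n and j = j_1…j_m ∈ A^m, let h = f_i^{-1} ∘ f_j, where f_a(x) = (x+a)/q and f_i = f_{i_1} ∘ … ∘ f_{i_n}, f_j = f_{j_1} ∘ … ∘ f_{j_m}; the map h is the affine map h(x) = q^{n−m} x + ∑_{k=1}^m j_k q^{n−k} − ∑_{k=1}^n i_k q^{n−k}. If q^{n−m} ∈ [ρ^{-1}, ρ] and h(0) ≠ 0, then |h(0)| ≥ 1/(Nρ). -/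

import Mathlib

/-!
Multiplying `h 0` by `q ^ (max n m - n)` clears the negative powers of `q`, and multiplying by `N`
clears the denominators of the digits. The result is a nonzero integer, so it has absolute value at
least `1`, while the first factor is at most `ρ` by the lower bound on the ratio `q ^ (n - m)`.
Of the integers this uses only that they form a subring whose nonzero elements have norm at least
`1`, as do for instance the Gaussian integers in `ℂ`.
-/

/-- For `q ≠ 0`, the number `q ^ n * f_w 0`, where `f_w` is the composition of the maps
`x ↦ (x + w k) / q` along the word `w`, whose letters are indexed from `0`. If `n` is the length
of the word `i`, then `(f_i⁻¹ ∘ f_j) 0 = wordSum q n j - wordSum q n i`. -/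
def wordSum {K : Type*} [Field K] (q : K) (n : ℤ) {l : ℕ} (w : Fin l → K) : K :=
  ∑ k, w k * q ^ (n - ((k : ℕ) + 1 : ℤ))

theorem zpow_sub_mul_wordSum {K : Type*} [Field K] {q : K} (hq : q ≠ 0) (n : ℤ) {l M : ℕ}
    (hlM : l ≤ M) (w : Fin l → K) :
    q ^ (M - n) * wordSum q n w = ∑ k, w k * q ^ (M - (k + 1) : ℕ) := by
  rw [wordSum, Finset.mul_sum]
  refine Finset.sum_congr rfl fun k _ => ?_
  rw [mul_left_comm, ← zpow_add₀ hq, ← zpow_natCast]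
  congr 2
  have := k.isLt
  omega

theorem mul_zpow_sub_mul_wordSum_mem {K : Type*} [Field K] {R : Subring K} {q N : K}
    (hq : q ≠ 0) (hqR : q ∈ R) (n : ℤ) {l M : ℕ} (hlM : l ≤ M) {w : Fin l → K}
    (hw : ∀ k, N * w k ∈ R) : N * (q ^ (M - n) * wordSum q n w) ∈ R := by
  rw [zpow_sub_mul_wordSum hq n hlM, Finset.mul_sum]
  refine sum_mem fun k _ => ?_
  rw [← mul_assoc]
  exact mul_mem (hw k) (pow_mem hqR _)

theorem norm_zpow_max_sub_le {K : Type*} [NormedField K] {q : K} {ρ : ℝ} (hρ : 1 ≤ ρ) {n m : ℤ}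
    (hratio : ρ⁻¹ ≤ ‖q ^ (n - m)‖) : ‖q ^ (max n m - n)‖ ≤ ρ := by
  rcases le_total m n with hmn | hnm
  · simpa [max_eq_left hmn] using hρ
  · rw [max_eq_right hnm, ← neg_sub, zpow_neg, norm_inv]
    exact inv_le_of_inv_le₀ (by positivity) hratio

theorem wsp_estimate_general {K : Type*} [NormedField K] {R : Subring K}
    (hR : ∀ x ∈ R, x ≠ 0 → 1 ≤ ‖x‖) {q N : K} (hq : q ≠ 0) (hqR : q ∈ R) (hN : N ≠ 0)
    {ρ : ℝ} (hρ : 1 ≤ ρ) {n m : ℕ} {i : Fin n → K} {j : Fin m → K}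
    (hi : ∀ k, N * i k ∈ R) (hj : ∀ k, N * j k ∈ R)
    (hratio : ρ⁻¹ ≤ ‖q ^ ((n : ℤ) - (m : ℤ))‖)
    (hne : wordSum q n j - wordSum q n i ≠ 0) :
    1 / (‖N‖ * ρ) ≤ ‖wordSum q n j - wordSum q n i‖ := by
  set c := q ^ (((max n m : ℕ) : ℤ) - n) with hc
  have hcρ : ‖c‖ ≤ ρ := by
    simpa only [hc, Nat.cast_max] using norm_zpow_max_sub_le hρ hratio
  have hmem : N * (c * (wordSum q n j - wordSum q n i)) ∈ R := by
    rw [mul_sub, mul_sub]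
    exact sub_mem (mul_zpow_sub_mul_wordSum_mem hq hqR n (le_max_right n m) hj)
      (mul_zpow_sub_mul_wordSum_mem hq hqR n (le_max_left n m) hi)
  have hne' : N * (c * (wordSum q n j - wordSum q n i)) ≠ 0 :=
    mul_ne_zero hN (mul_ne_zero (zpow_ne_zero _ hq) hne)
  rw [div_le_iff₀' (by positivity)]
  calc
    1 ≤ ‖N * (c * (wordSum q n j - wordSum q n i))‖ := hR _ hmem hne'
    _ = ‖N‖ * ‖c‖ * ‖wordSum q n j - wordSum q n i‖ := by rw [norm_mul, norm_mul, mul_assoc]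
    _ ≤ ‖N‖ * ρ * ‖wordSum q n j - wordSum q n i‖ := by gcongr

theorem one_le_norm_of_mem_range_intCast {x : ℝ} (hx : x ∈ (Int.castRingHom ℝ).range)
    (hx0 : x ≠ 0) : 1 ≤ ‖x‖ := by
  obtain ⟨z, rfl⟩ := hx
  rw [eq_intCast, Int.cast_ne_zero] at hx0
  rw [eq_intCast, Real.norm_eq_abs]
  exact_mod_cast Int.one_le_abs hx0

theorem natCast_mul_ratCast_mem_range_intCast {N : ℕ} {a : ℚ} (h : ∃ z : ℤ, (N : ℚ) * a = z) :
    (N : ℝ) * (a : ℝ) ∈ (Int.castRingHom ℝ).range := by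
  obtain ⟨z, hz⟩ := h
  refine ⟨z, ?_⟩
  rw [eq_intCast]
  exact_mod_cast hz.symm

/-- The weak separation estimate for the IFS `F_{q,A} = { x ↦ (x+a)/q : a ∈ A }`:
if `h = f_i⁻¹ ∘ f_j` has contraction ratio `q^(n-m) ∈ [ρ⁻¹, ρ]` and `h 0 ≠ 0`, then
`|h 0| ≥ 1/(Nρ)`, where `h 0 = ∑_{k=1}^m j_k q^{n-k} - ∑_{k=1}^n i_k q^{n-k}`. -/
theorem wsp_estimate (q : ℕ) (hq : 3 ≤ q) (A : Finset ℚ) (N : ℕ) (hN : 1 ≤ N)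
    (hNA : ∀ a ∈ A, ∃ z : ℤ, (N : ℚ) * a = (z : ℚ))
    (ρ : ℝ) (hρ : 1 < ρ)
    (n m : ℕ) (i : Fin n → ℚ) (j : Fin m → ℚ)
    (hi : ∀ k, i k ∈ A) (hj : ∀ k, j k ∈ A)
    (hratio : (q : ℝ) ^ ((n : ℤ) - (m : ℤ)) ∈ Set.Icc ρ⁻¹ ρ)
    (hne : (∑ k : Fin m, (j k : ℝ) * (q : ℝ) ^ ((n : ℤ) - ((k : ℕ) + 1 : ℤ)))
         - (∑ k : Fin n, (i k : ℝ) * (q : ℝ) ^ ((n : ℤ) - ((k : ℕ) + 1 : ℤ))) ≠ 0) :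
    1 / (N * ρ) ≤
      |(∑ k : Fin m, (j k : ℝ) * (q : ℝ) ^ ((n : ℤ) - ((k : ℕ) + 1 : ℤ)))
         - (∑ k : Fin n, (i k : ℝ) * (q : ℝ) ^ ((n : ℤ) - ((k : ℕ) + 1 : ℤ)))| := by
  rw [← Real.norm_natCast N, ← Real.norm_eq_abs]
  exact wsp_estimate_general (fun _ => one_le_norm_of_mem_range_intCast)
    (Nat.cast_ne_zero.2 (by lia)) (natCast_mem _ q) (Nat.cast_ne_zero.2 (by lia)) hρ.le
    (fun k => natCast_mul_ratCast_mem_range_intCast (hNA _ (hi k)))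
    (fun k => natCast_mul_ratCast_mem_range_intCast (hNA _ (hj k)))
    (hratio.1.trans (Real.le_norm_self _)) hne
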